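/- For all m, n ≥ 1, the map ι : PP(m,n) → PP(m,n+1) defined as follows is well defined, injective, and preserves both the area and the bounce statistics: writing a polyomino P ∈ PP(m,n) as a pair of paths with upper path U and lower path E·L (the lower path of any parallelogram polyomino begins with an east step E), ι(P) is the polyomino in PP(m,n+1) with upper path N·U and lower path E·N·L. That is, area(ι(P)) = area(P) and bounce(ι(P)) = bounce(P) for all P ∈ PP(m,n), and ι(P) = ι(P') implies P = P'. -/

import Mathlib

namespace QtN

/-! ### Lattice paths and parallelogram polyominoes -/

/-- A step of a lattice path: east or north. -/
inductive Step : Type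
  | E : Step
  | N : Step
  deriving DecidableEq, Repr

/-- Number of east steps of a path. -/
def countE (w : List Step) : ℕ := w.count Step.E

/-- Number of north steps of a path. -/
def countN (w : List Step) : ℕ := w.count Step.N

/-- Endpoint of a path started at the origin. -/
def pathPos (w : List Step) : ℕ × ℕ := (countE w, countN w)

/-- The set of lattice points visited by a path started at the origin. -/
def pathPts (w : List Step) : Finset (ℕ × ℕ) :=
  ((List.range (w.length + 1)).map (fun i => pathPos (w.take i))).toFinset

/-- `colHeightsAux w h`: for each east step of `w` (in order), the number of north
steps preceding it, starting with `h` north steps already performed. -/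
def colHeightsAux : List Step → ℕ → List ℕ
  | [], _ => []
  | Step.E :: r, h => h :: colHeightsAux r h
  | Step.N :: r, h => colHeightsAux r (h + 1)

/-- Height at which the path `w` crosses the vertical strip `i ≤ x ≤ i + 1`. -/
def colHeight (w : List Step) (i : ℕ) : ℕ := (colHeightsAux w 0).getD i 0

/-- A parallelogram polyomino of size `m × n`: a pair of monotone lattice paths from
`(0,0)` to `(m,n)` (east/north steps), the upper path staying weakly above the lower
path, and the two paths meeting only at `(0,0)` and `(m,n)`. -/
structure Polyomino (m n : ℕ) : Type where
  lower : List Step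
  upper : List Step
  lowerE : countE lower = m
  lowerN : countN lower = n
  upperE : countE upper = m
  upperN : countN upper = n
  above : ∀ i < m, colHeight lower i ≤ colHeight upper i
  meet : pathPts upper ∩ pathPts lower = {(0, 0), (m, n)}

/-- The area statistic: number of unit squares between the two paths,
minus `(m + n - 1)`. -/
def area {m n : ℕ} (P : Polyomino m n) : ℕ :=
  (∑ i ∈ Finset.range m, (colHeight P.upper i - colHeight P.lower i)) - (m + n - 1)

/-- Where an eastward run at height `y`, starting at `x`, first hits the lower path. -/
def eastTarget (hL : ℕ → ℕ) (m x y : ℕ) : ℕ :=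
  ((List.range m).filter (fun i => decide (x ≤ i ∧ y ≤ hL i))).headD m

/-- Total bounce contribution: from state `(x, y)` just after the `j`-th east-to-north
turn (counting the turns made so far), alternately go north until hitting the upper
path and east until hitting the lower path, each step contributing the number of
east-to-north turns preceding it. -/
def bounceAux (hU hL : ℕ → ℕ) (m n : ℕ) : ℕ → ℕ → ℕ → ℕ → ℕ
  | 0, _, _, _ => 0
  | fuel + 1, x, y, j =>
    if x = m ∧ y = n then 0
    else
      let y' := hU (x - 1)
      let x' := if y' = n then m else eastTarget hL m x y'
      (j + 1) * ((y' - y) + (x' - x)) + bounceAux hU hL m n fuel x' y' (j + 1)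

/-- The bounce statistic of a parallelogram polyomino: the bounce path starts with a
single east step (contributing `0`) and then alternates north runs (to the ceiling)
and east runs (to the floor); each step contributes the number of east-to-north turns
preceding it; finally `(m + n - 1)` is subtracted. -/
def bounce {m n : ℕ} (P : Polyomino m n) : ℕ :=
  bounceAux (colHeight P.upper) (colHeight P.lower) m n (m + n + 2) 1 0 0 - (m + n - 1)

/-! ### Set partitions and noncrossing partitions -/

/-- Maximum of a finite set of naturals (`0` for the empty set). -/
def fmax (β : Finset ℕ) : ℕ := β.sup id

/-- Minimum of a finite set of naturals (`0` for the empty set). -/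
def fmin (β : Finset ℕ) : ℕ := if h : β.Nonempty then β.min' h else 0

/-- A set partition of `{1, …, n}`, given by its finite set of blocks. -/
structure SetPartition (n : ℕ) : Type where
  blocks : Finset (Finset ℕ)
  not_empty_mem : ∅ ∉ blocks
  cover : ∀ i : ℕ, i ∈ Finset.Icc 1 n ↔ ∃ β ∈ blocks, i ∈ β
  disjoint : ∀ β ∈ blocks, ∀ γ ∈ blocks, β ≠ γ → Disjoint β γ

/-- A family of blocks is noncrossing if there are no `a < b < c < d` with
`a, c` in one block and `b, d` in a different block. -/
def IsNoncrossing (bs : Finset (Finset ℕ)) : Prop :=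
  ∀ a b c d : ℕ, a < b → b < c → c < d →
    ∀ β ∈ bs, ∀ γ ∈ bs, a ∈ β → c ∈ β → b ∈ γ → d ∈ γ → β = γ

/-- `NC n k`: noncrossing partitions of `{1, …, n}` with exactly `n - k + 1` blocks. -/
abbrev NC (n k : ℕ) : Type :=
  {P : SetPartition n // IsNoncrossing P.blocks ∧ P.blocks.card = n - k + 1}

/-- The skip statistic: `∑_{β} (max β - min β - |β| + 1)`. -/
def skip (bs : Finset (Finset ℕ)) : ℕ :=
  ∑ β ∈ bs, ((fmax β + 1 - fmin β) - β.card)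

/-- The non-singleton blocks of a partition. -/
def nsBlocks (bs : Finset (Finset ℕ)) : Finset (Finset ℕ) :=
  bs.filter (fun β => 2 ≤ β.card)

/-- The block of `bs` containing `x` (junk if there is not exactly one). -/
def blockContaining (bs : Finset (Finset ℕ)) (x : ℕ) : Finset ℕ :=
  (bs.filter (fun β => x ∈ β)).sup id

/-- For a noncrossing partition in `NC n 3`, the quadruple `(a, b, c, d)` describing its
non-singleton blocks: for two pair blocks `{a,b}` and `{c,d}` (with `a` the global
minimum) this is `(a, b, c, d)`; for a single triple block `{a, b, c}` (`a < b < c`)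
this is `(a, b, b, c)`. -/
def blockQuad (bs : Finset (Finset ℕ)) : ℕ × ℕ × ℕ × ℕ :=
  let A := blockContaining (nsBlocks bs) (fmin ((nsBlocks bs).sup id))
  if (nsBlocks bs).card = 1 then
    let l := A.sort (· ≤ ·)
    (l.getD 0 0, l.getD 1 0, l.getD 1 0, l.getD 2 0)
  else
    let B := ((nsBlocks bs).erase A).sup id
    (fmin A, fmax A, fmin B, fmax B)

/-- The leap statistic on `NC n 3`: `leap(ab|cd) = c - 2 + max(0, c - b)`,
and `leap({a,b,c}) = b - 2` (the case `b = c`). -/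
def leap (bs : Finset (Finset ℕ)) : ℕ :=
  let (_, b, c, _) := blockQuad bs
  (c - 2) + (c - b)

/-- The skew statistic on `NC n 3`: `skew(ab|cd) = c - 2 + a` if `b < c`, else `c - 2`;
`skew({a,b,c}) = b - 2` (the case `b = c`). -/
def skew (bs : Finset (Finset ℕ)) : ℕ :=
  let (a, b, c, _) := blockQuad bs
  if b < c then c - 2 + a else c - 2

/-- The mag statistic on `NC n 3`: `mag(ab|cd) = a + max(b, c) - 2 - ⌈(b - a)/2⌉`,
and `mag({a,b,c}) = a + b - 2 - ⌈(b - a)/2⌉` (the case `b = c`). -/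
def mag (bs : Finset (Finset ℕ)) : ℕ :=
  let (a, b, c, _) := blockQuad bs
  a + max b c - 2 - (b - a + 1) / 2

/-- The area statistic on noncrossing partitions:
`area(π) = ∑_{β, β' ∈ π} #{ i ∈ β' : i < max β < max β' }` (ordered pairs of blocks). -/
def ncArea (bs : Finset (Finset ℕ)) : ℕ :=
  ∑ β ∈ bs, ∑ γ ∈ bs, (γ.filter (fun i => i < fmax β ∧ fmax β < fmax γ)).card

/-- The elements of the non-singleton blocks, listed in increasing order, with
the middle element of a size-3 block listed twice. -/
def nsList (bs : Finset (Finset ℕ)) : List ℕ :=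
  let l := ((nsBlocks bs).sup id).sort (· ≤ ·)
  if l.length = 3 then [l.getD 0 0, l.getD 1 0, l.getD 1 0, l.getD 2 0] else l

/-- The multiset of block sizes of a partition. -/
def blockSizes (bs : Finset (Finset ℕ)) : Multiset ℕ := bs.val.map Finset.card

/-- The image of a partition of `{1, …, n}` under the flip `i ↦ n + 1 - i`. -/
def flipBlocks (n : ℕ) (bs : Finset (Finset ℕ)) : Finset (Finset ℕ) :=
  bs.image (fun β => β.image (fun i => n + 1 - i))

/-! ### The mingarc statistic -/

/-- The gaps `ν_r = m_{r+1} - m_r - 1` between consecutive block minima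
`m_1 < ⋯ < m_h` (with `m_{h+1} = n + 1`). -/
def nuList (n : ℕ) (bs : Finset (Finset ℕ)) : List ℕ :=
  let ms := ((bs.image fmin).sort (· ≤ ·)) ++ [n + 1]
  (List.range (bs.image fmin).card).map (fun r => ms.getD (r + 1) 0 - ms.getD r 0 - 1)

/-- Concatenation of `replicate ν c` over a list of pairs `(c, ν)`. -/
def repeatEach : List (ℕ × ℕ) → List ℕ
  | [] => []
  | p :: r => List.replicate p.2 p.1 ++ repeatEach r

/-- The right endpoints `y_1 ≤ ⋯ ≤ y_{k-1}`: each block maximum `c_r` repeated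
`ν_r` times, in increasing order. -/
def ysList (n : ℕ) (bs : Finset (Finset ℕ)) : List ℕ :=
  repeatEach (List.zip ((bs.image fmax).sort (· ≤ ·)) (nuList n bs))

/-- The left endpoints `x_1 < ⋯ < x_{k-1}`: the elements of `{1, …, n}` that are not
block maxima, in increasing order. -/
def xsList (n : ℕ) (bs : Finset (Finset ℕ)) : List ℕ :=
  ((Finset.Icc 1 n).filter (fun i => i ∉ bs.image fmax)).sort (· ≤ ·)

/-- Greedy left-to-right selection of arcs: keep the first arc, and thereafter keep the
earliest arc whose left endpoint exceeds the right endpoint of the last kept arc. -/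
def greedyArcs : List (ℕ × ℕ) → Option ℕ → List (ℕ × ℕ)
  | [], _ => []
  | a :: rest, none => a :: greedyArcs rest (some a.2)
  | a :: rest, some r =>
      if r < a.1 then a :: greedyArcs rest (some a.2) else greedyArcs rest (some r)

/-- The mingarc statistic: the sum of `n - y_i` over the greedily selected
candidate arcs `[x_i, y_i]`. -/
def mingarc (n : ℕ) (bs : Finset (Finset ℕ)) : ℕ :=
  ((greedyArcs (List.zip (xsList n bs) (ysList n bs)) none).map (fun p => n - p.2)).sum

/-! ### The map η from polyominoes to noncrossing partitions -/

/-- Largest column index `i < m` with `colHeight lower i ≤ j`: the rightmost cell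
adjacent to the floor in row `j`. -/
def eFloor {m k : ℕ} (P : Polyomino m k) (j : ℕ) : ℕ :=
  (((List.range m).filter (fun i => decide (colHeight P.lower i ≤ j))).getLastD 0)

/-- Smallest column index `i` with `colHeight upper i ≥ j + 1`: the leftmost cell
adjacent to the ceiling in row `j` (with default `m - 1`). -/
def fCeil {m k : ℕ} (P : Polyomino m k) (j : ℕ) : ℕ :=
  (((List.range m).filter (fun i => decide (j + 1 ≤ colHeight P.upper i))).headD (m - 1))

/-- The number of cells adjacent to the ceiling in row `j`. -/
def rowCount {m k : ℕ} (P : Polyomino m k) (j : ℕ) : ℕ :=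
  fCeil P (j + 1) - fCeil P j + 1

/-- Pick, `cnt` times, the largest label in `{1, …, L}` not used yet. -/
def pickRow : ℕ → ℕ → Finset ℕ → Finset ℕ
  | 0, _, _ => ∅
  | cnt + 1, L, used =>
      let x := fmax ((Finset.Icc 1 L) \ used)
      insert x (pickRow cnt L (insert x used))

/-- The blocks of `η(P)`: label the cells adjacent to the floor `1, …, n` going bottom
to top, left to right (the label of the floor cell in column `i`, row `j` is
`i + j + 1`, and the labels present in rows `≤ j` are exactly `1, …, eFloor P j + j + 1`);
then going bottom to top, left to right over the cells adjacent to the ceiling, assign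
to each the largest unused indexing label occurring in the same row or below; the
blocks are the label sets of the ceiling rows. -/
def etaBlocks {m k : ℕ} (P : Polyomino m k) : Finset (Finset ℕ) :=
  (((List.range k).foldl
      (fun st j =>
        let B := pickRow (rowCount P j) (eFloor P j + j + 1) st.1
        (st.1 ∪ B, B :: st.2))
      ((∅ : Finset ℕ), ([] : List (Finset ℕ)))).2).toFinset


theorem cha_succ (w : List Step) (h : ℕ) :
    colHeightsAux w (h + 1) = (colHeightsAux w h).map (· + 1) := by
  induction w generalizing h with
  | nil => rfl
  | cons s r ih => cases s <;> simp [colHeightsAux, ih]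

theorem cha_length (w : List Step) (h : ℕ) : (colHeightsAux w h).length = countE w := by
  induction w generalizing h with
  | nil => rfl
  | cons s r ih => cases s <;> simp [colHeightsAux, ih, countE]

theorem colHeight_N (w : List Step) (i : ℕ) (hi : i < countE w) :
    colHeight (Step.N :: w) i = colHeight w i + 1 := by
  have hl := cha_length w 0
  unfold colHeight
  rw [colHeightsAux, cha_succ]
  simp [List.getD_eq_getElem?_getD, List.getElem?_eq_getElem (l := colHeightsAux w 0) (hl ▸ hi)]

theorem colHeight_E_zero (w : List Step) : colHeight (Step.E :: w) 0 = 0 := by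
  simp [colHeight, colHeightsAux]

theorem colHeight_E_succ (w : List Step) (i : ℕ) :
    colHeight (Step.E :: w) (i + 1) = colHeight w i := by
  simp [colHeight, colHeightsAux]

theorem mem_pathPts (w : List Step) (p : ℕ × ℕ) :
    p ∈ pathPts w ↔ ∃ i ≤ w.length, pathPos (w.take i) = p := by
  simp [pathPts]

theorem mem_pathPts_cons (s : Step) (w : List Step) (p : ℕ × ℕ) :
    p ∈ pathPts (s :: w) ↔ p = (0, 0) ∨ ∃ q ∈ pathPts w, p = pathPos [s] + q := by
  simp only [mem_pathPts]
  constructor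
  · rintro ⟨i, hi, rfl⟩
    cases i with
    | zero => left; rfl
    | succ i =>
      right
      refine ⟨_, ⟨i, by simpa using hi, rfl⟩, ?_⟩
      cases s <;> simp [pathPos, countE, countN] <;> omega
  · rintro (rfl | ⟨q, ⟨i, hi, rfl⟩, rfl⟩)
    · exact ⟨0, by simp, rfl⟩
    · refine ⟨i + 1, by simpa using hi, ?_⟩
      cases s <;> simp [pathPos, countE, countN] <;> omega

theorem zero_mem_pathPts (w : List Step) : (0, 0) ∈ pathPts w :=
  (mem_pathPts _ _).2 ⟨0, by simp, rfl⟩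

theorem lower_eq {m n : ℕ} (hm : 1 ≤ m) (P : Polyomino m n) :
    P.lower = Step.E :: P.lower.tail := by
  have h1 := P.lowerE
  have h2 := P.upperE
  have h3 := P.above 0 hm
  have h4 := P.meet
  rcases hL : P.lower with _ | ⟨s, L⟩
  · rw [hL] at h1; simp [countE] at h1; omega
  rcases hU : P.upper with _ | ⟨t, U⟩
  · rw [hU] at h2; simp [countE] at h2; omega
  rw [hL] at h1 h3 h4
  rw [hU] at h2 h3 h4
  cases s with
  | E => rfl
  | N =>
    exfalso
    have hc : countE L = m := by simpa [countE] using h1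
    cases t with
    | E => rw [colHeight_E_zero, colHeight_N _ _ (by omega)] at h3; omega
    | N =>
      have : ((0, 1) : ℕ × ℕ) ∈ pathPts (Step.N :: U) ∩ pathPts (Step.N :: L) := by
        simp only [Finset.mem_inter, mem_pathPts_cons]
        exact ⟨.inr ⟨_, zero_mem_pathPts _, rfl⟩, .inr ⟨_, zero_mem_pathPts _, rfl⟩⟩
      rw [h4] at this
      simp at this
      omega

theorem colHeight_low {m n : ℕ} (hm : 1 ≤ m) (P : Polyomino m n) (i : ℕ) (h0 : 1 ≤ i)
    (hi : i < m) :
    colHeight (Step.E :: Step.N :: P.lower.tail) i = colHeight P.lower i + 1 := by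
  have h := lower_eq hm P
  have h1 := P.lowerE
  rw [h] at h1
  obtain ⟨k, rfl⟩ : ∃ k, i = k + 1 := ⟨i - 1, by omega⟩
  rw [h, colHeight_E_succ, colHeight_E_succ, List.tail_cons, colHeight_N]
  simp [countE] at h1 ⊢
  omega

/-- The embedding. -/
def iotaMap {m n : ℕ} (hm : 1 ≤ m) (P : Polyomino m n) : Polyomino m (n + 1) where
  lower := Step.E :: Step.N :: P.lower.tail
  upper := Step.N :: P.upper
  lowerE := by
    have h := P.lowerE
    rw [lower_eq hm P] at h
    simpa [countE] using h
  lowerN := by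
    have h := P.lowerN
    rw [lower_eq hm P] at h
    simpa [countN] using h
  upperE := by simpa [countE] using P.upperE
  upperN := by simpa [countN] using P.upperN
  above := by
    intro i hi
    rcases Nat.eq_zero_or_pos i with rfl | h0
    · simp [colHeight_E_zero]
    · rw [colHeight_low hm P i h0 hi, colHeight_N _ _ (by rw [P.upperE]; exact hi)]
      have := P.above i hi
      omega
  meet := by
    have h4 := P.meet
    rw [lower_eq hm P] at h4
    ext p
    have key := fun q : ℕ × ℕ => Finset.ext_iff.1 h4 q
    simp only [Finset.mem_inter, mem_pathPts_cons, Finset.mem_insert, Finset.mem_singleton]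
      at key ⊢
    constructor
    · rintro ⟨rfl | ⟨q, hq, rfl⟩, h⟩
      · simp
      · rcases h with h | ⟨r, rfl | ⟨t, ht, rfl⟩, h⟩
        · simp [pathPos, countE, countN, Prod.ext_iff] at h
        · simp [pathPos, countE, countN, Prod.ext_iff] at h
        · have hqt : q = pathPos [Step.E] + t := by
            simp [pathPos, countE, countN, Prod.ext_iff] at h ⊢
            omega
          have := (key q).1 ⟨hq, .inr ⟨t, ht, hqt⟩⟩
          rcases this with rfl | rfl
          · simp [pathPos, countE, countN, Prod.ext_iff] at hqt
            omega
          · right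
            simp [pathPos, countE, countN, Prod.ext_iff]
            omega
    · rintro (rfl | rfl)
      · simp
      · obtain ⟨hu, hl⟩ := (key (m, n)).2 (.inr rfl)
        refine ⟨.inr ⟨_, hu, ?_⟩, .inr ?_⟩
        · simp [pathPos, countE, countN, Prod.ext_iff]; omega
        · rcases hl with hl | ⟨q, hq, hqe⟩
          · simp at hl; omega
          · refine ⟨pathPos [Step.N] + q, .inr ⟨q, hq, rfl⟩, ?_⟩
            simp [pathPos, countE, countN, Prod.ext_iff] at hqe ⊢
            omega

theorem eastTarget_bounds (hL : ℕ → ℕ) (m x y : ℕ) (hx : x ≤ m) :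
    x ≤ eastTarget hL m x y ∧ eastTarget hL m x y ≤ m := by
  unfold eastTarget
  rcases h : (List.range m).filter (fun i => decide (x ≤ i ∧ y ≤ hL i)) with _ | ⟨a, l⟩
  · simp [hx]
  · have : a ∈ (List.range m).filter (fun i => decide (x ≤ i ∧ y ≤ hL i)) := by rw [h]; exact List.mem_cons_self
    simp at this
    simp
    omega

theorem bounceAux_stall (hU hL : ℕ → ℕ) (m n f x j : ℕ)
    (hs : (if hU (x - 1) = n then m else eastTarget hL m x (hU (x - 1))) = x) :
    bounceAux hU hL m n f x (hU (x - 1)) j = 0 := by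
  induction f generalizing j with
  | zero => rfl
  | succ f ih =>
    simp only [bounceAux, hs, ih]
    simp

theorem bounceAux_fuel (hU hL : ℕ → ℕ) (m n f x y j : ℕ) (hx : x ≤ m) (hf : m - x + 1 ≤ f) :
    bounceAux hU hL m n (f + 1) x y j = bounceAux hU hL m n f x y j := by
  induction f generalizing x y j with
  | zero => omega
  | succ f ih =>
    rw [bounceAux, bounceAux]
    split_ifs with h1
    · rfl
    · simp only
      generalize hs : (if hU (x - 1) = n then m else eastTarget hL m x (hU (x - 1))) = x'
      congr 1
      have hb := eastTarget_bounds hL m x (hU (x - 1)) hx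
      have hx' : x ≤ x' ∧ x' ≤ m := by
        split_ifs at hs <;> omega
      rcases Nat.eq_or_lt_of_le hx'.1 with he | hlt
      · subst he
        rw [bounceAux_stall _ _ _ _ _ _ _ hs, bounceAux_stall _ _ _ _ _ _ _ hs]
      · exact ih _ _ _ hx'.2 (by omega)

theorem eastTarget_shift (hL hL' : ℕ → ℕ) (m x y : ℕ) (hx : 1 ≤ x)
    (h : ∀ i, 1 ≤ i → i < m → hL' i = hL i + 1) :
    eastTarget hL' m x (y + 1) = eastTarget hL m x y := by
  unfold eastTarget
  congr 1
  apply List.filter_congr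
  intro i hi
  simp only [List.mem_range] at hi
  apply decide_eq_decide.2
  constructor
  · rintro ⟨h1, h2⟩
    rw [h i (by omega) hi] at h2
    omega
  · rintro ⟨h1, h2⟩
    rw [h i (by omega) hi]
    omega

theorem bounceAux_shift (hU hL hU' hL' : ℕ → ℕ) (m n f x y j : ℕ) (hx : 1 ≤ x) (hxm : x ≤ m)
    (h : ∀ i, 1 ≤ i → i < m → hL' i = hL i + 1) (h' : ∀ i, i < m → hU' i = hU i + 1) :
    bounceAux hU' hL' m (n + 1) f x (y + 1) j = bounceAux hU hL m n f x y j := by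
  induction f generalizing x y j with
  | zero => rfl
  | succ f ih =>
    have hb := eastTarget_bounds hL m x (hU (x - 1)) hxm
    simp only [bounceAux, h' (x - 1) (by omega), eastTarget_shift hL hL' m x _ hx h,
      Nat.add_right_cancel_iff, Nat.add_sub_add_right]
    rw [ih]
    · split_ifs <;> omega
    · split_ifs <;> omega

/-- For all `m, n ≥ 1`, the map `ι : PP(m,n) → PP(m,n+1)` sending a polyomino with
upper path `U` and lower path `E·L` to the polyomino with upper path `N·U` and lower
path `E·N·L` is well defined, injective, and preserves both area and bounce. -/
theorem exists_embedding_preserving_area_bounce (m n : ℕ) (hm : 1 ≤ m) (hn : 1 ≤ n) :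
    ∃ ι : Polyomino m n → Polyomino m (n + 1),
      (∀ P : Polyomino m n, (ι P).upper = Step.N :: P.upper) ∧
      (∀ (P : Polyomino m n) (L : List Step), P.lower = Step.E :: L →
        (ι P).lower = Step.E :: Step.N :: L) ∧
      Function.Injective ι ∧
      (∀ P : Polyomino m n, area (ι P) = area P ∧ bounce (ι P) = bounce P) := by
  refine ⟨iotaMap hm, fun P => rfl, ?_, ?_, ?_⟩
  · intro P L h
    simp [iotaMap, h]
  · intro P Q h
    have h1 : P.upper = Q.upper := by
      have := congrArg Polyomino.upper h
      simpa [iotaMap] using this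
    have h2 : P.lower = Q.lower := by
      have := congrArg Polyomino.lower h
      rw [lower_eq hm P, lower_eq hm Q]
      simpa [iotaMap] using this
    cases P
    cases Q
    simp only at h1 h2
    subst h1 h2
    rfl
  · intro P
    have hU : ∀ i, i < m → colHeight (iotaMap hm P).upper i = colHeight P.upper i + 1 :=
      fun i hi => colHeight_N _ _ (by rw [P.upperE]; exact hi)
    have hL : ∀ i, 1 ≤ i → i < m → colHeight (iotaMap hm P).lower i = colHeight P.lower i + 1 :=
      fun i h0 hi => colHeight_low hm P i h0 hi
    have hL0 : colHeight (iotaMap hm P).lower 0 = 0 := colHeight_E_zero _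
    have hL0' : colHeight P.lower 0 = 0 := by rw [lower_eq hm P]; exact colHeight_E_zero _
    constructor
    · obtain ⟨k, rfl⟩ : ∃ k, m = k + 1 := ⟨m - 1, by omega⟩
      unfold area
      rw [Finset.sum_range_succ', Finset.sum_range_succ', hL0, hL0', hU 0 (by omega)]
      rw [Finset.sum_congr rfl (g := fun i => colHeight P.upper (i + 1) - colHeight P.lower (i + 1))]
      · omega
      · intro i hi
        simp only [Finset.mem_range] at hi
        rw [hU _ (by omega), hL _ (by omega) (by omega)]
        omega
    · unfold bounce
      have e1 : m + (n + 1) + 2 = (m + n + 2) + 1 := by omega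
      have hb := eastTarget_bounds (colHeight P.lower) m 1 (colHeight P.upper 0) hm
      rw [e1, bounceAux_fuel _ _ _ _ _ _ _ _ hm (by omega)]
      rw [bounceAux, bounceAux, if_neg (by omega), if_neg (by omega)]
      simp only [Nat.sub_self, hU 0 (by omega), Nat.add_right_cancel_iff,
        eastTarget_shift _ _ m 1 _ le_rfl hL]
      rw [bounceAux_shift _ _ _ _ _ _ _ _ _ _ (by split_ifs <;> omega)
        (by split_ifs <;> omega) hL hU]
      omega

end QtN
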